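/- Let k be an integer, t ∈ ℝ, and let f, g, h : ℝ → ℝ be twice differentiable at t (playing the roles of τ_{k−1}, τ_k, τ_{k+1}). For ε ≠ 0 define D(ε) = ( ε^{2k²} ( g(t) g(t+2ε) − g(t+ε)² ) + ε^{2k²+2} ( h(t) f(t+2ε) − h(t+ε) f(t+ε) ) )² − 4 · ε^{2k²+2k+1} ( h(t+ε) g(t+ε) − h(t) g(t+2ε) ) · ε^{2k²−2k+1} ( g(t+ε) f(t+ε) − g(t) f(t+2ε) ). Then lim_{ε→0} ε^{−(4k²+4)} D(ε) = ( g(t) g''(t) − g'(t)² )² − 4 ( h'(t) g(t) − h(t) g'(t) ) ( g'(t) f(t) − g(t) f'(t) ); that is, under the scaling τ̃_{k,m} = ε^{k²} τ_k(mε), t = mε, the 1+1 dimensional reduction of the discrete CKP equation converges as ε → 0 to the quartic form of the Toda lattice of CKP type ( τ̈_k τ_k − (τ̇_k)² )² = 4 ( τ̇_{k+1} τ_k − τ_{k+1} τ̇_k ) ( τ̇_k τ_{k−1} − τ_k τ̇_{k−1} ). -/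

import Mathlib

open Filter

/-!
Since `ε ^ (4k² + 4) = (ε ^ (2k² + 2))²`, the rescaled quantity `ε ^ (-(4k² + 4)) D(ε)` is
`(A / ε² - B)² - 4 (P / ε) (Q / ε)`, where `A = g(t) g(t+2ε) - g(t+ε)²` and `B`, `P`, `Q` are the
differences `u(t+ε) v(t+ε) - u(t) v(t+2ε)` for `(u, v) = (h, f), (h, g), (g, f)`. Such a difference
vanishes at `ε = 0` with derivative `u' v - u v'`, which settles `B`, `P` and `Q`. Finally
`A = g(t) (g(t+2ε) - 2 g(t+ε) + g(t)) - (g(t+ε) - g(t))²`, and the second difference of `g` divided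
by `ε²` tends to `g''(t)` by Taylor's formula with Peano remainder.
-/

open scoped Topology

section Taylor

variable {𝕜 E : Type*} [RCLike 𝕜] [NormedAddCommGroup E] [NormedSpace 𝕜 E]
  {f f' : 𝕜 → E} {f'' : E} {t : 𝕜}

theorem isLittleO_taylor_two_remainder (hf : ∀ᶠ x in 𝓝 t, HasDerivAt f (f' x) x)
    (hf' : HasDerivAt f' f'' t) :
    (fun x ↦ f x - f t - (x - t) • f' t - ((x - t) ^ 2 / 2) • f'') =o[𝓝 t]
      fun x ↦ (x - t) ^ 2 := by
  let _ : NormedSpace ℝ E := NormedSpace.restrictScalars ℝ 𝕜 E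
  obtain ⟨r, hr, hball⟩ := Metric.eventually_nhds_iff_ball.mp hf
  have hderiv : ∀ x ∈ Metric.ball t r,
      HasDerivAt (fun x ↦ f x - (x - t) • f' t - ((x - t) ^ 2 / 2) • f'')
        (f' x - f' t - (x - t) • f'') x := fun x hx ↦ by
    have hlin : HasDerivAt (fun x ↦ x - t) 1 x := (hasDerivAt_id' x).sub_const t
    have hsq : HasDerivAt (fun x ↦ (x - t) ^ 2 / 2) (x - t) x :=
      ((hlin.fun_pow 2).div_const 2).congr_deriv (by simp)
    simpa only [one_smul] using
      ((hball x hx).fun_sub (hlin.smul_const (f' t))).fun_sub (hsq.smul_const f'')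
  have hsmall : (fun x ↦ ContinuousLinearMap.toSpanSingleton 𝕜 (f' x - f' t - (x - t) • f''))
      =o[𝓝[Metric.ball t r] t] fun x ↦ ‖x - t‖ ^ 1 := by
    refine .of_norm_left ?_
    simpa only [ContinuousLinearMap.norm_toSpanSingleton, pow_one] using
      (hf'.isLittleO.mono nhdsWithin_le_nhds).norm_norm
  have hmvt := (convex_ball t r).isLittleO_pow_succ (Metric.mem_ball_self hr)
    (fun x hx ↦ (hderiv x hx).hasFDerivAt.hasFDerivWithinAt) hsmall
  rw [nhdsWithin_eq_nhds.mpr (Metric.ball_mem_nhds t hr)] at hmvt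
  simp only [← norm_pow] at hmvt
  refine hmvt.of_norm_right.congr_left fun x ↦ ?_
  simp only [sub_self, zero_smul, ne_eq, OfNat.ofNat_ne_zero, not_false_eq_true, zero_pow,
    zero_div, sub_zero]
  abel

theorem tendsto_inv_sq_smul_taylor_one_remainder (hf : ∀ᶠ x in 𝓝 t, HasDerivAt f (f' x) x)
    (hf' : HasDerivAt f' f'' t) :
    Tendsto (fun ε ↦ (ε ^ 2)⁻¹ • (f (t + ε) - f t - ε • f' t)) (𝓝[≠] 0)
      (𝓝 ((2 : 𝕜)⁻¹ • f'')) := by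
  have hshift : Tendsto (fun ε : 𝕜 ↦ t + ε) (𝓝[≠] 0) (𝓝 t) :=
    (Continuous.tendsto' (by fun_prop) 0 t (add_zero t)).mono_left nhdsWithin_le_nhds
  have hrem :=
    ((isLittleO_taylor_two_remainder hf hf').comp_tendsto hshift).tendsto_inv_smul_nhds_zero
  simp only [Function.comp_def, add_sub_cancel_left] at hrem
  refine tendsto_sub_nhds_zero_iff.mp (hrem.congr' ?_)
  filter_upwards [self_mem_nhdsWithin] with ε (hε : ε ≠ 0)
  rw [smul_sub _ _ ((ε ^ 2 / 2) • f''), smul_smul]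
  congr 2
  field_simp

theorem tendsto_inv_sq_smul_second_difference (hf : ∀ᶠ x in 𝓝 t, HasDerivAt f (f' x) x)
    (hf' : HasDerivAt f' f'' t) :
    Tendsto (fun ε ↦ (ε ^ 2)⁻¹ • (f (t + 2 * ε) - (2 : 𝕜) • f (t + ε) + f t)) (𝓝[≠] 0)
      (𝓝 f'') := by
  have hone := tendsto_inv_sq_smul_taylor_one_remainder hf hf'
  have hdouble : Tendsto (fun ε : 𝕜 ↦ 2 * ε) (𝓝[≠] 0) (𝓝[≠] 0) := by
    refine tendsto_nhdsWithin_iff.mpr ⟨?_, ?_⟩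
    · exact (Continuous.tendsto' (by fun_prop) 0 0 (mul_zero 2)).mono_left nhdsWithin_le_nhds
    · filter_upwards [self_mem_nhdsWithin] with ε hε using mul_ne_zero two_ne_zero hε
  have htwo := hone.comp hdouble
  convert! (htwo.const_smul (4 : 𝕜)).sub (hone.const_smul (2 : 𝕜)) using 2 with ε
  · simp only [Function.comp_apply, mul_pow, mul_inv, smul_smul]
    module
  · module

end Taylor

section ShiftedProducts

variable {𝕜 A : Type*} [NontriviallyNormedField 𝕜] [NormedRing A] [NormedAlgebra 𝕜 A]
  {u v : 𝕜 → A} {u' v' : A} {t : 𝕜}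

theorem hasDerivAt_mul_shift_sub_mul_shift_two
    (hu : HasDerivAt u u' t) (hv : HasDerivAt v v' t) :
    HasDerivAt (fun ε ↦ u (t + ε) * v (t + ε) - u t * v (t + 2 * ε)) (u' * v t - u t * v') 0 := by
  have hu_shift : HasDerivAt (fun ε ↦ u (t + ε)) u' 0 :=
    HasDerivAt.comp_const_add t 0 (by rwa [add_zero])
  have hv_shift : HasDerivAt (fun ε ↦ v (t + ε)) v' 0 :=
    HasDerivAt.comp_const_add t 0 (by rwa [add_zero])
  have hv_shift_two : HasDerivAt (fun ε ↦ v (t + 2 * ε)) ((2 : 𝕜) • v') 0 := by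
    have htwo : HasDerivAt (fun ε ↦ t + 2 * ε) 2 0 := by
      simpa only [mul_one] using ((hasDerivAt_id' (0 : 𝕜)).const_mul 2).const_add t
    exact hv.scomp_of_eq 0 htwo (by simp)
  refine ((hu_shift.mul hv_shift).sub (hv_shift_two.const_mul (u t))).congr_deriv ?_
  simp only [add_zero, two_smul, mul_add]
  abel

theorem tendsto_inv_smul_mul_shift_sub_mul_shift_two
    (hu : HasDerivAt u u' t) (hv : HasDerivAt v v' t) :
    Tendsto (fun ε ↦ ε⁻¹ • (u (t + ε) * v (t + ε) - u t * v (t + 2 * ε))) (𝓝[≠] 0)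
      (𝓝 (u' * v t - u t * v')) := by
  simpa using (hasDerivAt_mul_shift_sub_mul_shift_two hu hv).tendsto_slope_zero

end ShiftedProducts

theorem tendsto_inv_sq_smul_mul_shift_two_sub_sq_shift {𝕜 A : Type*} [RCLike 𝕜]
    [NormedCommRing A] [NormedAlgebra 𝕜 A] {g g' : 𝕜 → A} {g'' : A} {t : 𝕜}
    (hg : ∀ᶠ x in 𝓝 t, HasDerivAt g (g' x) x) (hg' : HasDerivAt g' g'' t) :
    Tendsto (fun ε ↦ (ε ^ 2)⁻¹ • (g t * g (t + 2 * ε) - g (t + ε) ^ 2)) (𝓝[≠] 0)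
      (𝓝 (g t * g'' - g' t ^ 2)) := by
  have hsecond := tendsto_inv_sq_smul_second_difference hg hg'
  have hfirst := hg.self_of_nhds.tendsto_slope_zero
  refine ((hsecond.const_mul (g t)).sub (hfirst.pow 2)).congr fun ε ↦ ?_
  rw [smul_pow, inv_pow, mul_smul_comm, ← smul_sub, two_smul]
  ring_nf

theorem zpow_neg_mul_discrete_ckp_eq {K : Type*} [Field K] {ε : K} (hε : ε ≠ 0) (k : ℤ)
    (a b p q : K) :
    ε ^ (-(4 * k ^ 2 + 4)) * ((ε ^ (2 * k ^ 2) * a + ε ^ (2 * k ^ 2 + 2) * b) ^ 2 -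
        4 * (ε ^ (2 * k ^ 2 + 2 * k + 1) * p) * (ε ^ (2 * k ^ 2 - 2 * k + 1) * q)) =
      ((ε ^ 2)⁻¹ * a + b) ^ 2 - 4 * (ε⁻¹ * p) * (ε⁻¹ * q) := by
  set w := ε ^ (2 * k ^ 2 + 1) with hw
  have hw_ne : w ≠ 0 := zpow_ne_zero _ hε
  have hprod : ε ^ (2 * k ^ 2 + 2 * k + 1) * ε ^ (2 * k ^ 2 - 2 * k + 1) = w ^ 2 := by
    rw [hw, ← zpow_add₀ hε, ← zpow_natCast, ← zpow_mul]
    ring_nf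
  have hlow : ε ^ (2 * k ^ 2) = w * ε⁻¹ := by
    rw [hw, zpow_add_one₀ hε, mul_inv_cancel_right₀ hε]
  have hhigh : ε ^ (2 * k ^ 2 + 2) = w * ε := by
    rw [hw, ← zpow_add_one₀ hε]
    ring_nf
  have hnorm : ε ^ (-(4 * k ^ 2 + 4)) = ((w * ε) ^ 2)⁻¹ := by
    rw [← hhigh, ← zpow_natCast, ← zpow_mul, ← zpow_neg]
    ring_nf
  calc
    _ = ((w * ε) ^ 2)⁻¹ * ((w * ε⁻¹ * a + w * ε * b) ^ 2 - 4 * w ^ 2 * p * q) := by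
      rw [hnorm, hlow, hhigh, ← hprod]
      ring
    _ = _ := by field_simp

theorem stmt_19_general {𝕜 : Type*} [RCLike 𝕜] (k : ℤ) (t : 𝕜) (f g h : 𝕜 → 𝕜)
    (hf : DifferentiableAt 𝕜 f t)
    (hg : ∀ᶠ s in 𝓝 t, DifferentiableAt 𝕜 g s) (hg' : DifferentiableAt 𝕜 (deriv g) t)
    (hh : DifferentiableAt 𝕜 h t) :
    Tendsto (fun ε : 𝕜 ↦
        ε ^ (-(4 * k ^ 2 + 4)) *
          ((ε ^ (2 * k ^ 2) * (g t * g (t + 2 * ε) - g (t + ε) ^ 2) +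
              ε ^ (2 * k ^ 2 + 2) * (h t * f (t + 2 * ε) - h (t + ε) * f (t + ε))) ^ 2 -
            4 * (ε ^ (2 * k ^ 2 + 2 * k + 1) * (h (t + ε) * g (t + ε) - h t * g (t + 2 * ε))) *
              (ε ^ (2 * k ^ 2 - 2 * k + 1) * (g (t + ε) * f (t + ε) - g t * f (t + 2 * ε)))))
      (𝓝[≠] 0)
      (𝓝 ((g t * deriv (deriv g) t - deriv g t ^ 2) ^ 2 -
        4 * (deriv h t * g t - h t * deriv g t) * (deriv g t * f t - g t * deriv f t))) := by
  have hf_deriv := hf.hasDerivAt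
  have hg_deriv := hg.self_of_nhds.hasDerivAt
  have hh_deriv := hh.hasDerivAt
  have hgg := tendsto_inv_sq_smul_mul_shift_two_sub_sq_shift
    (hg.mono fun _ hs ↦ hs.hasDerivAt) hg'.hasDerivAt
  have hhf : Tendsto (fun ε ↦ h (t + ε) * f (t + ε) - h t * f (t + 2 * ε)) (𝓝[≠] 0) (𝓝 0) := by
    have hcont := (hasDerivAt_mul_shift_sub_mul_shift_two hh_deriv hf_deriv).continuousAt
    simpa using hcont.continuousWithinAt.tendsto
  have hhg := tendsto_inv_smul_mul_shift_sub_mul_shift_two hh_deriv hg_deriv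
  have hgf := tendsto_inv_smul_mul_shift_sub_mul_shift_two hg_deriv hf_deriv
  have hlim := ((hgg.sub hhf).pow 2).sub ((hhg.const_mul 4).mul hgf)
  rw [sub_zero] at hlim
  refine hlim.congr' ?_
  filter_upwards [self_mem_nhdsWithin] with ε hε
  rw [zpow_neg_mul_discrete_ckp_eq hε]
  simp only [smul_eq_mul]
  ring

/-- Theorem 4.1 (continuum limit of the 1+1 dimensional reduction of the discrete CKP
equation): let `f, g, h` (playing the roles of `τ_{k-1}, τ_k, τ_{k+1}`) be twice
differentiable at `t` (differentiable near `t`, with derivative differentiable at `t`).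
Under the scaling `τ̃_{k,m} = ε^{k²} τ_k(mε)`, `t = mε`, the discrete-CKP quantity `D(ε)`
satisfies `ε^{-(4k²+4)} D(ε) → (g g'' - g'²)² - 4 (h' g - h g')(g' f - g f')` as `ε → 0`,
i.e. the discrete equation converges to the quartic form of the Toda lattice of CKP type. -/
theorem stmt_19 (k : ℤ) (t : ℝ) (f g h : ℝ → ℝ)
    (hf : ∀ᶠ s in nhds t, DifferentiableAt ℝ f s) (hf' : DifferentiableAt ℝ (deriv f) t)
    (hg : ∀ᶠ s in nhds t, DifferentiableAt ℝ g s) (hg' : DifferentiableAt ℝ (deriv g) t)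
    (hh : ∀ᶠ s in nhds t, DifferentiableAt ℝ h s) (hh' : DifferentiableAt ℝ (deriv h) t) :
    Tendsto (fun ε : ℝ =>
        (ε ^ (-(4 * k ^ 2 + 4)) : ℝ) *
          ((ε ^ (2 * k ^ 2) * (g t * g (t + 2 * ε) - g (t + ε) ^ 2) +
              ε ^ (2 * k ^ 2 + 2) * (h t * f (t + 2 * ε) - h (t + ε) * f (t + ε))) ^ 2 -
            4 * (ε ^ (2 * k ^ 2 + 2 * k + 1) * (h (t + ε) * g (t + ε) - h t * g (t + 2 * ε))) *
              (ε ^ (2 * k ^ 2 - 2 * k + 1) * (g (t + ε) * f (t + ε) - g t * f (t + 2 * ε)))))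
      (nhdsWithin 0 {(0 : ℝ)}ᶜ)
      (nhds ((g t * deriv (deriv g) t - (deriv g t) ^ 2) ^ 2 -
        4 * (deriv h t * g t - h t * deriv g t) * (deriv g t * f t - g t * deriv f t))) :=
  stmt_19_general k t f g h hf.self_of_nhds hg hg' hh.self_of_nhds
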